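/- arXiv:0808.2748 — 2 statements merged into one kernel-verified Lean document; each statement's English description precedes it below -/
import Mathlib

section
/- Let a0, a1, a2, b0 be real numbers with a2 > 0 and 4*a0*a2 - a1^2 > 0, and let a0' = (a0 - a1 + a2)*(a0 + a1 + a2), a1' = 2*a1*(a0 - a2), a2' = 4*a0*a2, b0' = 2*b0*(a0 + a2). Then a2' > 0 and 4*a0'*a2' - (a1')^2 > 0; that is, the order-2 Landen transformation maps quadratics with negative discriminant (hence finite integral over ℝ) to quadratics with negative discriminant. -/
/-!
Write `Q(x) = a0 + a1 x + a2 x²`. The Landen transformation comes from the duplication formula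
`cot 2θ = (cot² θ - 1) / (2 cot θ)`: under `y = (x² - 1) / (2x)`, the new quadratic `Q'` satisfies
`x² Q'(y) = Q(x) · x² Q(-1/x)`, so its roots are the images of those of `Q`. If `r`, `s` are the
roots of `Q`, their images differ by `(r - s)(1 + 1/(rs)) / 2`, where `1/(rs) = a2/a0`; multiplying
the square of this by `a2'² = (4 a0 a2)²` shows that the discriminant is multiplied by
`4 (a0 + a2)²`. A negative discriminant gives `0 ≤ a1² < 4 a0 a2 ≤ (a0 + a2)²`, so `a2'` and this
factor are both positive.
-/

theorem discrim_landen {R : Type*} [CommRing R] (a0 a1 a2 : R) :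
    discrim (4 * a0 * a2) (2 * a1 * (a0 - a2)) ((a0 - a1 + a2) * (a0 + a1 + a2)) =
      4 * (a0 + a2) ^ 2 * discrim a2 a1 a0 := by
  simp only [discrim]
  ring

section LinearOrderedCommRing

variable {R : Type*} [CommRing R] [LinearOrder R] [IsStrictOrderedRing R]

theorem discrim_lt_zero_iff {a b c : R} : discrim a b c < 0 ↔ 0 < 4 * c * a - b ^ 2 := by
  rw [discrim, sub_neg, sub_pos, mul_right_comm]

theorem four_mul_mul_pos_of_discrim_lt_zero {a b c : R} (h : discrim a b c < 0) : 0 < 4 * c * a :=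
  (sq_nonneg b).trans_lt (sub_pos.mp (discrim_lt_zero_iff.mp h))

theorem landen_order2_preserves_negative_discriminant_general {a0 a1 a2 a0' a1' a2' : R}
    (hdisc : discrim a2 a1 a0 < 0)
    (h0 : a0' = (a0 - a1 + a2) * (a0 + a1 + a2))
    (h1 : a1' = 2 * a1 * (a0 - a2))
    (h2 : a2' = 4 * a0 * a2) :
    0 < a2' ∧ discrim a2' a1' a0' < 0 := by
  subst h0 h1 h2
  have hlead : 0 < 4 * a0 * a2 := four_mul_mul_pos_of_discrim_lt_zero hdisc
  have hsq : 0 < (a0 + a2) ^ 2 := hlead.trans_le (four_mul_le_sq_add a0 a2)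
  refine ⟨hlead, ?_⟩
  rw [discrim_landen]
  exact mul_neg_of_pos_of_neg (mul_pos four_pos hsq) hdisc

end LinearOrderedCommRing

theorem landen_order2_preserves_negative_discriminant
    (a0 a1 a2 b0 a0' a1' a2' b0' : ℝ)
    (ha2 : a2 > 0) (hdisc : 4 * a0 * a2 - a1 ^ 2 > 0)
    (h0 : a0' = (a0 - a1 + a2) * (a0 + a1 + a2))
    (h1 : a1' = 2 * a1 * (a0 - a2))
    (h2 : a2' = 4 * a0 * a2)
    (h3 : b0' = 2 * b0 * (a0 + a2)) :
    a2' > 0 ∧ 4 * a0' * a2' - a1' ^ 2 > 0 :=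
  (landen_order2_preserves_negative_discriminant_general
    (discrim_lt_zero_iff.mpr hdisc) h0 h1 h2).imp_right discrim_lt_zero_iff.mp
end

section
/- ∫_{-∞}^{∞} 8*(13848x^2 + 11652x + 11531) / (569088x^4 - 35136x^3 + 756384x^2 - 8616x + 232537) dx = ∫_{-∞}^{∞} 1/(x^4 + 6x^3 + 16x^2 + 21x + 13) dx. -/
open MeasureTheory

/-!
The map `φ x = (x - x⁻¹) / 2` is two-to-one from `ℝ \ {0}` onto `ℝ`: the points over `sinh t` are
`exp t` and `-exp (-t)`. Pushing the measure `f dx` forward along `φ` yields the measure with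
density the Landen transform of `f`, so total integrals agree. On rational functions the transform
is computed without radicals, because `x ↦ -x⁻¹` exchanges the two points of each fibre: symmetric
expressions in them, such as `A x * A (-x⁻¹)`, are polynomials in `φ x`.
-/

section LandenTransform

open Real Set

variable {E : Type*} [NormedAddCommGroup E] [NormedSpace ℝ E]

/-- The Landen transform of order two: the density of the push-forward of `f dx` along
`φ x = (x - x⁻¹) / 2`. It is written in the parameter `arsinh y`, in which the two branches of `φ⁻¹`
are `exp (arsinh y)` and `-exp (-arsinh y)`. -/
noncomputable def landenTransform (f : ℝ → E) (y : ℝ) : E :=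
  (exp (arsinh y) * (√(1 + y ^ 2))⁻¹) • f (exp (arsinh y)) +
    (exp (-arsinh y) * (√(1 + y ^ 2))⁻¹) • f (-exp (-arsinh y))

theorem hasDerivAt_exp_arsinh (y : ℝ) :
    HasDerivAt (fun y ↦ exp (arsinh y)) (exp (arsinh y) * (√(1 + y ^ 2))⁻¹) y :=
  (hasDerivAt_arsinh y).exp

theorem injective_exp_arsinh : Function.Injective fun y ↦ exp (arsinh y) :=
  exp_injective.comp arsinh_injective

theorem range_exp_arsinh : range (fun y ↦ exp (arsinh y)) = Ioi 0 :=
  (arsinh_surjective.range_comp exp).trans range_exp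

theorem abs_exp_arsinh_mul_inv_sqrt (y : ℝ) :
    |exp (arsinh y) * (√(1 + y ^ 2))⁻¹| = exp (arsinh y) * (√(1 + y ^ 2))⁻¹ :=
  abs_of_nonneg (by positivity)

theorem integrableOn_Ioi_iff_integrable_exp_arsinh {f : ℝ → E} :
    IntegrableOn f (Ioi 0) ↔
      Integrable fun y ↦ (exp (arsinh y) * (√(1 + y ^ 2))⁻¹) • f (exp (arsinh y)) := by
  simpa only [image_univ, range_exp_arsinh, abs_exp_arsinh_mul_inv_sqrt, integrableOn_univ] using
    integrableOn_image_iff_integrableOn_abs_deriv_smul .univ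
      (fun y _ ↦ (hasDerivAt_exp_arsinh y).hasDerivWithinAt) injective_exp_arsinh.injOn f

theorem integral_Ioi_eq_integral_exp_arsinh (f : ℝ → E) :
    ∫ x in Ioi 0, f x = ∫ y, (exp (arsinh y) * (√(1 + y ^ 2))⁻¹) • f (exp (arsinh y)) := by
  simpa only [image_univ, range_exp_arsinh, abs_exp_arsinh_mul_inv_sqrt, setIntegral_univ] using
    integral_image_eq_integral_abs_deriv_smul .univ
      (fun y _ ↦ (hasDerivAt_exp_arsinh y).hasDerivWithinAt) injective_exp_arsinh.injOn f

theorem integrable_landenTransform_neg_branch {f : ℝ → E} (hf : Integrable f) :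
    Integrable fun y ↦ (exp (-arsinh y) * (√(1 + y ^ 2))⁻¹) • f (-exp (-arsinh y)) := by
  simpa only [arsinh_neg, neg_sq] using
    (integrableOn_Ioi_iff_integrable_exp_arsinh.1 hf.comp_neg.integrableOn).comp_neg

theorem integral_Iic_eq_integral_neg_branch (f : ℝ → E) :
    ∫ x in Iic 0, f x =
      ∫ y, (exp (-arsinh y) * (√(1 + y ^ 2))⁻¹) • f (-exp (-arsinh y)) := by
  calc ∫ x in Iic 0, f x = ∫ x in Ioi 0, f (-x) := by rw [integral_comp_neg_Ioi, neg_zero]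
    _ = ∫ y, (exp (arsinh y) * (√(1 + y ^ 2))⁻¹) • f (-exp (arsinh y)) :=
      integral_Ioi_eq_integral_exp_arsinh fun x ↦ f (-x)
    _ = _ := by
      rw [← integral_neg_eq_self]
      simp only [arsinh_neg, neg_sq]

theorem integrable_landenTransform {f : ℝ → E} (hf : Integrable f) :
    Integrable (landenTransform f) :=
  (integrableOn_Ioi_iff_integrable_exp_arsinh.1 hf.integrableOn).add
    (integrable_landenTransform_neg_branch hf)

theorem integral_landenTransform {f : ℝ → E} (hf : Integrable f) :
    ∫ y, landenTransform f y = ∫ x, f x := by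
  have h_pos := integrableOn_Ioi_iff_integrable_exp_arsinh.1 hf.integrableOn
  calc ∫ y, landenTransform f y = (∫ x in Ioi 0, f x) + ∫ x in Iic 0, f x := by
        rw [integral_Ioi_eq_integral_exp_arsinh, integral_Iic_eq_integral_neg_branch]
        exact integral_add h_pos (integrable_landenTransform_neg_branch hf)
    _ = ∫ x, f x := by
        rw [add_comm, intervalIntegral.integral_Iic_add_Ioi hf.integrableOn hf.integrableOn]

theorem exp_arsinh_sub_inv_div_two (y : ℝ) :
    (exp (arsinh y) - (exp (arsinh y))⁻¹) / 2 = y := by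
  rw [← exp_neg, ← sinh_eq, sinh_arsinh]

theorem exp_arsinh_add_inv_div_two (y : ℝ) :
    (exp (arsinh y) + (exp (arsinh y))⁻¹) / 2 = √(1 + y ^ 2) := by
  rw [← exp_neg, ← cosh_eq, cosh_arsinh]

theorem landenTransform_div {N D N₁ D₁ : ℝ → ℝ} (hD : ∀ x ≠ 0, D x ≠ 0)
    (hD₁ : ∀ x ≠ 0, D₁ ((x - x⁻¹) / 2) = D x * D (-x⁻¹))
    (hN₁ : ∀ x ≠ 0, (x + x⁻¹) / 2 * N₁ ((x - x⁻¹) / 2) =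
      x * N x * D (-x⁻¹) + x⁻¹ * N (-x⁻¹) * D x) :
    landenTransform (fun x ↦ N x / D x) = fun y ↦ N₁ y / D₁ y := by
  funext y
  have h_sinh := exp_arsinh_sub_inv_div_two y
  have h_cosh := exp_arsinh_add_inv_div_two y
  have h_inv : exp (-arsinh y) = (exp (arsinh y))⁻¹ := exp_neg _
  have hx : exp (arsinh y) ≠ 0 := (exp_pos _).ne'
  set x := exp (arsinh y)
  have hDx : D x ≠ 0 := hD x hx
  have hDx' : D (-x⁻¹) ≠ 0 := hD _ (neg_ne_zero.2 (inv_ne_zero hx))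
  have h_sqrt : √(1 + y ^ 2) ≠ 0 := by positivity
  calc landenTransform (fun x ↦ N x / D x) y
    _ = (√(1 + y ^ 2))⁻¹ * (x * (N x / D x) + x⁻¹ * (N (-x⁻¹) / D (-x⁻¹))) := by
      simp only [landenTransform, h_inv, smul_eq_mul, x]
      ring
    _ = (√(1 + y ^ 2))⁻¹ *
        ((x * N x * D (-x⁻¹) + x⁻¹ * N (-x⁻¹) * D x) / (D x * D (-x⁻¹))) := by
      rw [← mul_div_assoc, ← mul_div_assoc, div_add_div _ _ hDx hDx', mul_comm (D x) (x⁻¹ * _)]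
    _ = N₁ y / D₁ y := by
      rw [← hN₁ x hx, ← hD₁ x hx, h_sinh, h_cosh, mul_div_assoc, inv_mul_cancel_left₀ h_sqrt]

end LandenTransform

open Asymptotics Filter Polynomial in
theorem integrable_eval_div_eval {p q : ℝ[X]} (hq : ∀ x, q.eval x ≠ 0)
    (h : p.degree + 2 ≤ q.degree) : Integrable fun x ↦ p.eval x / q.eval x := by
  have h_degree : (p * (1 + X ^ 2)).degree ≤ q.degree := by
    rwa [degree_mul, show (1 + X ^ 2 : ℝ[X]).degree = 2 by compute_degree!]
  have h_isBigO : (fun x ↦ p.eval x / q.eval x) =O[cocompact ℝ] fun x ↦ (1 + x ^ 2)⁻¹ := by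
    rw [← Metric.cobounded_eq_cocompact]
    refine ((isBigO_cobounded_of_degree_le h_degree).mul
      (isBigO_refl (fun x ↦ ((1 + x ^ 2) * q.eval x)⁻¹) _)).congr (fun x ↦ ?_) fun x ↦ ?_
    · simp only [eval_mul, eval_add, eval_one, eval_pow, eval_X]
      field_simp [hq x]
    · field_simp [hq x]
  exact (p.continuous.div q.continuous hq).locallyIntegrable.integrable_of_isBigO_cocompact
    h_isBigO (integrable_inv_one_add_sq.integrableAtFilter _)

/-- A rational function `(b₂ x² + b₁ x + b₀) / (a₄ x⁴ + a₃ x³ + a₂ x² + a₁ x + a₀)`, given by its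
coefficients so that the Landen transformation can act on them. The fraction need not be reduced,
and `a₄ = 0` is allowed. -/
structure QuarticFraction where
  (b₂ b₁ b₀ a₄ a₃ a₂ a₁ a₀ : ℝ)

namespace QuarticFraction

/-- The numerator, as a function. -/
def num (R : QuarticFraction) (x : ℝ) : ℝ :=
  R.b₂ * x ^ 2 + R.b₁ * x + R.b₀

/-- The denominator, as a function. -/
def den (R : QuarticFraction) (x : ℝ) : ℝ :=
  R.a₄ * x ^ 4 + R.a₃ * x ^ 3 + R.a₂ * x ^ 2 + R.a₁ * x + R.a₀

/-- The rational function on `ℝ`, with Lean's value `0` at the zeros of the denominator. -/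
noncomputable def eval (R : QuarticFraction) (x : ℝ) : ℝ :=
  R.num x / R.den x

/-- The rational Landen transformation of order two on coefficients. The new denominator expresses
`den x * den (-x⁻¹)` as a polynomial in `(x - x⁻¹) / 2`; adding the terms of the two
fibre points `x` and `-x⁻¹` over this common denominator gives the new numerator. -/
def landen (R : QuarticFraction) : QuarticFraction where
  b₂ := 8 * (R.a₄ * R.b₀ + R.a₀ * R.b₂)
  b₁ := 4 * (R.a₃ * R.b₀ + (R.a₀ - R.a₄) * R.b₁ - R.a₁ * R.b₂)
  b₀ := 2 * ((R.a₀ + R.a₂ + R.a₄) * (R.b₀ + R.b₂) - (R.a₁ + R.a₃) * R.b₁)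
  a₄ := 16 * (R.a₀ * R.a₄)
  a₃ := 8 * (R.a₀ * R.a₃ - R.a₁ * R.a₄)
  a₂ := 4 * (R.a₀ * R.a₂ - R.a₁ * R.a₃ + R.a₂ * R.a₄) + 16 * (R.a₀ * R.a₄)
  a₁ := 2 * (R.a₀ * R.a₁ - R.a₁ * R.a₂ + R.a₂ * R.a₃ - R.a₃ * R.a₄) +
    6 * (R.a₀ * R.a₃ - R.a₁ * R.a₄)
  a₀ := R.a₀ ^ 2 - R.a₁ ^ 2 + R.a₂ ^ 2 - R.a₃ ^ 2 + R.a₄ ^ 2 +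
    2 * (R.a₀ * R.a₂ - R.a₁ * R.a₃ + R.a₂ * R.a₄) + 2 * (R.a₀ * R.a₄)

variable (R : QuarticFraction)

theorem den_landen {x : ℝ} (hx : x ≠ 0) :
    R.landen.den ((x - x⁻¹) / 2) = R.den x * R.den (-x⁻¹) := by
  simp only [den, landen]
  field_simp
  ring

theorem num_landen {x : ℝ} (hx : x ≠ 0) :
    (x + x⁻¹) / 2 * R.landen.num ((x - x⁻¹) / 2) =
      x * R.num x * R.den (-x⁻¹) + x⁻¹ * R.num (-x⁻¹) * R.den x := by
  simp only [num, den, landen]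
  field_simp
  ring

theorem den_landen_ne_zero (hR : ∀ x, R.den x ≠ 0) (y : ℝ) : R.landen.den y ≠ 0 := by
  have hx := (Real.exp_pos (Real.arsinh y)).ne'
  rw [← exp_arsinh_sub_inv_div_two y, R.den_landen hx]
  exact mul_ne_zero (hR _) (hR _)

theorem landenTransform_eval (hR : ∀ x, R.den x ≠ 0) :
    landenTransform R.eval = R.landen.eval :=
  landenTransform_div (fun x _ ↦ hR x) (fun _ ↦ R.den_landen) fun _ ↦ R.num_landen

theorem integrable_eval_landen (hR : ∀ x, R.den x ≠ 0) (h_int : Integrable R.eval) :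
    Integrable R.landen.eval :=
  R.landenTransform_eval hR ▸ integrable_landenTransform h_int

theorem integral_eval_landen (hR : ∀ x, R.den x ≠ 0) (h_int : Integrable R.eval) :
    ∫ x, R.landen.eval x = ∫ x, R.eval x := by
  rw [← R.landenTransform_eval hR, integral_landenTransform h_int]

theorem integral_eval_landen_iterate (hR : ∀ x, R.den x ≠ 0) (h_int : Integrable R.eval) (n : ℕ) :
    ∫ x, (landen^[n] R).eval x = ∫ x, R.eval x := by
  induction n generalizing R with
  | zero => rfl
  | succ n ih =>
    calc ∫ x, (landen^[n] R.landen).eval x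
      _ = ∫ x, R.landen.eval x :=
        ih R.landen (R.den_landen_ne_zero hR) (R.integrable_eval_landen hR h_int)
      _ = ∫ x, R.eval x := R.integral_eval_landen hR h_int

open Polynomial in
theorem integrable_eval (hR : ∀ x, R.den x ≠ 0) (ha₄ : R.a₄ ≠ 0) : Integrable R.eval := by
  let p : ℝ[X] := C R.b₂ * X ^ 2 + C R.b₁ * X + C R.b₀
  let q : ℝ[X] := C R.a₄ * X ^ 4 + C R.a₃ * X ^ 3 + C R.a₂ * X ^ 2 + C R.a₁ * X + C R.a₀
  have hp_eval (x : ℝ) : p.eval x = R.num x := by simp [p, num]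
  have hq_eval (x : ℝ) : q.eval x = R.den x := by simp [q, den]
  have h_degree : p.degree + 2 ≤ q.degree := by
    have hp : p.degree ≤ 2 := degree_quadratic_le
    have hq : q.degree = 4 := by unfold q; compute_degree!
    rw [hq]
    exact add_le_add_left hp 2
  exact (integrable_eval_div_eval (fun x ↦ (hq_eval x).symm ▸ hR x) h_degree).congr
    (.of_forall fun x ↦ by simp only [hp_eval, hq_eval, QuarticFraction.eval])

end QuarticFraction

theorem landen_step_two_invariance :
    ∫ x : ℝ, 8 * (13848 * x ^ 2 + 11652 * x + 11531) /
        (569088 * x ^ 4 - 35136 * x ^ 3 + 756384 * x ^ 2 - 8616 * x + 232537)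
      = ∫ x : ℝ, 1 / (x ^ 4 + 6 * x ^ 3 + 16 * x ^ 2 + 21 * x + 13) := by
  let F : QuarticFraction := ⟨0, 0, 1, 1, 6, 16, 21, 13⟩
  have hF_landen : F.landen = ⟨8, 24, 60, 208, 456, 600, 396, 171⟩ := by
    norm_num [F, QuarticFraction.landen]
  have hF_landen_landen : F.landen.landen =
      ⟨8 * 13848, 8 * 11652, 8 * 11531, 569088, -35136, 756384, -8616, 232537⟩ := by
    rw [hF_landen]
    norm_num [QuarticFraction.landen]
  have hF_den (x : ℝ) : F.den x ≠ 0 := by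
    have h_sq : F.den x = (x ^ 2 + 3 * x + 7 / 2) ^ 2 + 3 / 4 := by
      simp only [F, QuarticFraction.den]; ring
    rw [h_sq]
    positivity
  calc
    _ = ∫ x, F.landen.landen.eval x := by
      rw [hF_landen_landen]
      simp only [QuarticFraction.eval, QuarticFraction.num, QuarticFraction.den]
      ring_nf
    _ = ∫ x, F.eval x :=
      F.integral_eval_landen_iterate hF_den (F.integrable_eval hF_den one_ne_zero) 2
    _ = _ := by simp [F, QuarticFraction.eval, QuarticFraction.num, QuarticFraction.den]
end
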